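/- arXiv:1101.0803 — 3 statements merged into one kernel-verified Lean document; each statement's English description precedes it below -/
import Mathlib

section
/- Let n ≥ 1, let 1 ≤ m ≤ 2n+1, and let i ∈ {1,…,n}. Then, in the field of rational functions in x_1,…,x_{2n+1} (equivalently, as an identity of formal Laurent series, where the derivatives of the logarithm series are taken termwise), one has: (1+x_{2i}) x_{2i} S_m(x_1,…,x̂_{2i},…,x_{2n+1}) · ∂/∂x_{2i}[ln(1−x_{2i}/x_{2i−1})] + (1+x_{2i−1}) x_{2i−1} S_m(x_1,…,x̂_{2i−1},…,x_{2n+1}) · ∂/∂x_{2i−1}[ln(1−x_{2i}/x_{2i−1})] = x_{2i} · ( S_m(x_1,…,x̂_{2i−1},x̂_{2i},…,x_{2n+1}) − S_{m−1}(x_1,…,x̂_{2i−1},x̂_{2i},…,x_{2n+1}) ). Here ∂/∂x_{2i}[ln(1−x_{2i}/x_{2i−1})] = −1/(x_{2i−1}−x_{2i}) and ∂/∂x_{2i−1}[ln(1−x_{2i}/x_{2i−1})] = x_{2i}/(x_{2i−1}(x_{2i−1}−x_{2i})). -/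
noncomputable section

open Finset MvPolynomial

/-- The `m`-th elementary symmetric polynomial in the variables `x j`, `j ∈ s`
(so `S_0 = 1`, and `S_m = 0` for `m > #s`). -/
def esymOn {R : Type*} [CommSemiring R] {N : ℕ} (s : Finset (Fin N)) (m : ℕ)
    (x : Fin N → R) : R :=
  ∑ A ∈ Finset.powersetCard m s, ∏ j ∈ A, x j

theorem esymOn_insert_succ {R : Type*} [CommSemiring R] {N : ℕ} (s : Finset (Fin N)) (c : Fin N)
    (hc : c ∉ s) (k : ℕ) (x : Fin N → R) :
    esymOn (insert c s) (k + 1) x = esymOn s (k + 1) x + x c * esymOn s k x := by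
  unfold esymOn
  rw [Finset.powersetCard_succ_insert hc, Finset.sum_union, Finset.sum_image, Finset.mul_sum]
  · congr 1
    refine Finset.sum_congr rfl fun A hA => ?_
    rw [Finset.prod_insert]
    exact fun h => hc ((Finset.mem_powersetCard.1 hA).1 h)
  · intro A hA B hB h
    have hA' : c ∉ A := fun h => hc ((Finset.mem_powersetCard.1 hA).1 h)
    have hB' : c ∉ B := fun h => hc ((Finset.mem_powersetCard.1 hB).1 h)
    rw [← Finset.erase_insert hA', ← Finset.erase_insert hB']
    exact congrArg (fun t => Finset.erase t c) h
  · rw [Finset.disjoint_left]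
    intro A hA hA2
    obtain ⟨B, _, rfl⟩ := Finset.mem_image.1 hA2
    exact hc ((Finset.mem_powersetCard.1 hA).1 (Finset.mem_insert_self c B))

/-- Lemma on the logarithmic derivative terms.
In the field of rational functions in `x_1,…,x_{2n+1}` (here the fraction field of
`ℚ[x_1,…,x_{2n+1}]`), for `1 ≤ m ≤ 2n+1` and a pair index `i ∈ {1,…,n}`
(0-based `i0 : Fin n`, so the 1-based variables `x_{2i-1}, x_{2i}` have 0-based
indices `a = 2 i0`, `b = 2 i0 + 1`), using
`∂/∂x_{2i} ln(1-x_{2i}/x_{2i-1}) = -1/(x_{2i-1}-x_{2i})` and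
`∂/∂x_{2i-1} ln(1-x_{2i}/x_{2i-1}) = x_{2i}/(x_{2i-1}(x_{2i-1}-x_{2i}))`:
`(1+x_{2i}) x_{2i} S_m(…,x̂_{2i},…)·(-1/(x_{2i-1}-x_{2i}))
 + (1+x_{2i-1}) x_{2i-1} S_m(…,x̂_{2i-1},…)·(x_{2i}/(x_{2i-1}(x_{2i-1}-x_{2i})))
 = x_{2i} (S_m(…,x̂_{2i-1},x̂_{2i},…) - S_{m-1}(…,x̂_{2i-1},x̂_{2i},…))`. -/
theorem log_derivative_identity (n : ℕ) (hn : 1 ≤ n) (m : ℕ) (hm1 : 1 ≤ m)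
    (hm2 : m ≤ 2 * n + 1) (i0 : Fin n) :
    letI K := FractionRing (MvPolynomial (Fin (2 * n + 1)) ℚ)
    let x : Fin (2 * n + 1) → K :=
      fun j => algebraMap (MvPolynomial (Fin (2 * n + 1)) ℚ) K (X j)
    let a : Fin (2 * n + 1) := ⟨2 * (i0 : ℕ), by omega⟩
    let b : Fin (2 * n + 1) := ⟨2 * (i0 : ℕ) + 1, by omega⟩
    (1 + x b) * x b * esymOn (Finset.univ.erase b) m x * (-(1 / (x a - x b))) +
        (1 + x a) * x a * esymOn (Finset.univ.erase a) m x *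
          (x b / (x a * (x a - x b))) =
      x b * (esymOn ((Finset.univ.erase a).erase b) m x -
        esymOn ((Finset.univ.erase a).erase b) (m - 1) x) := by
  intro x a b
  have hab : a ≠ b := by
    intro h
    have := congrArg Fin.val h
    simp [a, b] at this
  have hinj : Function.Injective x := fun p q h =>
    MvPolynomial.X_injective (IsFractionRing.injective _ _ h)
  have ha : x a ≠ 0 := by
    intro h
    exact MvPolynomial.X_ne_zero (R := ℚ) a
      (IsFractionRing.injective _ (FractionRing (MvPolynomial (Fin (2 * n + 1)) ℚ))
        (h.trans (map_zero _).symm))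
  have hd : x a - x b ≠ 0 := sub_ne_zero.2 fun h => hab (hinj h)
  obtain ⟨k, rfl⟩ : ∃ k, m = k + 1 := ⟨m - 1, by omega⟩
  have e1 : (Finset.univ.erase a) = insert b ((Finset.univ.erase a).erase b) := by
    rw [Finset.insert_erase]; simp [hab.symm]
  have e2 : (Finset.univ.erase b) = insert a ((Finset.univ.erase a).erase b) := by
    rw [Finset.erase_right_comm, Finset.insert_erase]; simp [hab]
  have h1 := esymOn_insert_succ ((Finset.univ.erase a).erase b) b (by simp) k x
  have h2 := esymOn_insert_succ ((Finset.univ.erase a).erase b) a (by simp) k x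
  rw [← e1] at h1
  rw [← e2] at h2
  rw [h1, h2, Nat.add_sub_cancel]
  generalize esymOn ((Finset.univ.erase a).erase b) (k + 1) x = P
  generalize esymOn ((Finset.univ.erase a).erase b) k x = Q
  generalize x a = u at *
  generalize x b = v at *
  field_simp
  ring

end
end

section
/- Let n ≥ 1, let p ≥ 1, let 1 ≤ m ≤ 2n+1, and let i ≠ j be indices in {1,…,2n+1}. Then in the polynomial ring in the variables x_1,…,x_{2n+1}: (1+x_i) x_i S_m(x_1,…,x̂_i,…,x_{2n+1}) · ∂/∂x_i[(x_i−x_j)^p] + (1+x_j) x_j S_m(x_1,…,x̂_j,…,x_{2n+1}) · ∂/∂x_j[(x_i−x_j)^p] = p · ( x_i x_j S_{m−1}(x_1,…,x̂_i,…,x̂_j,…,x_{2n+1}) + S_m(x_1,…,x̂_i,…,x̂_j,…,x_{2n+1}) + (x_i+x_j) S_m(x_1,…,x̂_i,…,x̂_j,…,x_{2n+1}) ) · (x_i−x_j)^p. (Equivalently, (1+x_i)x_i S_m(x̂_i) − (1+x_j)x_j S_m(x̂_j) = (x_i−x_j)·( x_i x_j S_{m−1}(x̂_i,x̂_j) + S_m(x̂_i,x̂_j)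 + (x_i+x_j) S_m(x̂_i,x̂_j) ).) -/
noncomputable section

open Finset MvPolynomial

theorem esymOn_erase_succ {R : Type*} [CommSemiring R] {N : ℕ} (s : Finset (Fin N)) (j : Fin N)
    (hj : j ∈ s) (k : ℕ) (x : Fin N → R) :
    esymOn s (k + 1) x = esymOn (s.erase j) (k + 1) x + x j * esymOn (s.erase j) k x := by
  have hn : j ∉ s.erase j := Finset.notMem_erase j s
  have key : ∀ A ∈ Finset.powersetCard k (s.erase j), j ∉ A := fun A hA h =>
    hn ((Finset.mem_powersetCard.1 hA).1 h)
  unfold esymOn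
  conv_lhs => rw [← Finset.insert_erase hj]
  rw [Finset.powersetCard_succ_insert hn, Finset.sum_union, Finset.sum_image, Finset.mul_sum]
  · congr 1
    exact Finset.sum_congr rfl fun A hA => Finset.prod_insert (key A hA)
  · intro A hA B hB h
    have h2 := congrArg (fun C => Finset.erase C j) h
    simpa [Finset.erase_insert (key A hA), Finset.erase_insert (key B hB)] using h2
  · rw [Finset.disjoint_left]
    intro A hA hB
    obtain ⟨B, _, rfl⟩ := Finset.mem_image.1 hB
    exact hn ((Finset.mem_powersetCard.1 hA).1 (Finset.mem_insert_self j B))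

/-- In `ℚ[x_1,…,x_{2n+1}]`, for `p ≥ 1`, `1 ≤ m ≤ 2n+1` and
indices `i ≠ j`:
`(1+x_i) x_i S_m(…,x̂_i,…) ∂/∂x_i[(x_i-x_j)^p] + (1+x_j) x_j S_m(…,x̂_j,…) ∂/∂x_j[(x_i-x_j)^p]
 = p (x_i x_j S_{m-1}(…,x̂_i,x̂_j,…) + S_m(…,x̂_i,x̂_j,…) + (x_i+x_j) S_m(…,x̂_i,x̂_j,…)) (x_i-x_j)^p`. -/
theorem vandermonde_derivative_identity (n p : ℕ) (hn : 1 ≤ n) (hp : 1 ≤ p)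
    (m : ℕ) (hm1 : 1 ≤ m) (hm2 : m ≤ 2 * n + 1) (i j : Fin (2 * n + 1)) (hij : i ≠ j) :
    (1 + (X i : MvPolynomial (Fin (2 * n + 1)) ℚ)) * X i *
          esymOn (Finset.univ.erase i) m X * pderiv i ((X i - X j) ^ p) +
        (1 + X j) * X j * esymOn (Finset.univ.erase j) m X *
          pderiv j ((X i - X j) ^ p) =
      (p : MvPolynomial (Fin (2 * n + 1)) ℚ) *
          (X i * X j * esymOn ((Finset.univ.erase i).erase j) (m - 1) X +
            esymOn ((Finset.univ.erase i).erase j) m X +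
            (X i + X j) * esymOn ((Finset.univ.erase i).erase j) m X) *
          (X i - X j) ^ p := by
  obtain ⟨k, rfl⟩ : ∃ k, m = k + 1 := ⟨m - 1, by omega⟩
  obtain ⟨q, rfl⟩ : ∃ q, p = q + 1 := ⟨p - 1, by omega⟩
  rw [esymOn_erase_succ (Finset.univ.erase i) j (by simp [hij.symm]),
    esymOn_erase_succ (Finset.univ.erase j) i (by simp [hij]),
    Finset.erase_right_comm (a := j) (b := i)]
  have h1 : pderiv i ((X i - X j : MvPolynomial (Fin (2 * n + 1)) ℚ) ^ (q + 1)) =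
      ((q + 1 : ℕ) : MvPolynomial (Fin (2 * n + 1)) ℚ) * (X i - X j) ^ q := by
    simp [pderiv_pow, pderiv_X_of_ne hij.symm]
  have h2 : pderiv j ((X i - X j : MvPolynomial (Fin (2 * n + 1)) ℚ) ^ (q + 1)) =
      -(((q + 1 : ℕ) : MvPolynomial (Fin (2 * n + 1)) ℚ) * (X i - X j) ^ q) := by
    simp [pderiv_pow, pderiv_X_of_ne hij]
  rw [h1, h2, Nat.add_sub_cancel]
  ring

end
end

section
/- Let p ≥ 3 be an odd integer. Then the following (15p−5)/2 holomorphic functions on the complex upper half-plane ℍ are linearly independent over ℂ: the functions τ ↦ τ^i·(θ''_{p−r}(τ) − θ''_{p+r}(τ)) for 1 ≤ r ≤ (p−1)/2 and 0 ≤ i ≤ 2; the functions τ ↦ τ^i·θ'_r(τ) for 1 ≤ r ≤ 2p−1 and 0 ≤ i ≤ 1; and the functions τ ↦ θ_r(τ) for 0 ≤ r ≤ 2p. -/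
noncomputable section

open Complex

/-- The `k`-th normalized derivative of the theta constant
`θ_r(τ) = ∑_{j ∈ r/(4p)+ℤ} q^{2pj²}`, `q = e^{2πiτ}`; i.e. the result of applying
`q·d/dq = (2πi)⁻¹ d/dτ` termwise `k` times (`k = 0` gives `θ_r`, `k = 1` gives `θ'_r`,
`k = 2` gives `θ''_r`). -/
def thetaDeriv (p : ℕ) (k : ℕ) (r : ℤ) (τ : ℂ) : ℂ :=
  ∑' j : ℤ, (2 * (p : ℂ) * ((r : ℂ) / (4 * p) + j) ^ 2) ^ k *
    Complex.exp (2 * Real.pi * Complex.I * τ * (2 * (p : ℂ) * ((r : ℂ) / (4 * p) + j) ^ 2))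

/-- Power series vanishing on the punctured disc has zero coefficients. -/
lemma coeff_zero_of_hasSum (A : ℕ → ℂ)
    (h : ∀ w : ℂ, w ≠ 0 → ‖w‖ < 1 → HasSum (fun m => A m * w ^ m) 0) : ∀ m, A m = 0 := by
  classical
  let f : ℂ → ℂ := fun w => if w = 0 then A 0 else 0
  have hf : HasFPowerSeriesOnBall f (FormalMultilinearSeries.ofScalars ℂ A) 0
      ((1 / 2 : NNReal) : ENNReal) := by
    refine ⟨?_, by simp, ?_⟩
    · apply FormalMultilinearSeries.le_radius_of_summable
      have h2 := (h (1 / 2) (by norm_num) (by norm_num)).summable.norm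
      refine h2.congr fun m => ?_
      rw [FormalMultilinearSeries.ofScalars_norm]
      simp
    · intro y hy
      have hy' : ‖y‖ < 1 := by
        have : ‖y‖ < 1 / 2 := by
          have h3 : (‖y‖₊ : ENNReal) < ((1 / 2 : NNReal) : ENNReal) := by
            simpa only [Metric.mem_eball, edist_zero_right, enorm] using hy
          have h4 : ‖y‖₊ < 1 / 2 := by exact_mod_cast h3
          have h5 := NNReal.coe_lt_coe.2 h4
          simpa using h5
        linarith
      simp only [zero_add, FormalMultilinearSeries.ofScalars_apply_eq, smul_eq_mul]
      by_cases hy0 : y = 0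
      · subst hy0
        have := hasSum_single (f := fun m => A m * (0 : ℂ) ^ m) 0 (by
          intro m hm; simp [hm])
        simpa [f] using this
      · simpa [f, hy0] using h y hy0 hy'
  have hc : ContinuousAt f 0 := hf.hasFPowerSeriesAt.continuousAt
  have h0 : A 0 = 0 := by
    have h1 : Filter.Tendsto f (nhdsWithin 0 {0}ᶜ) (nhds (A 0)) := by
      have := hc.tendsto.mono_left (nhdsWithin_le_nhds (s := {0}ᶜ))
      simpa [f] using this
    have h2 : Filter.Tendsto f (nhdsWithin 0 {0}ᶜ) (nhds 0) := by
      refine tendsto_const_nhds.congr' ?_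
      filter_upwards [self_mem_nhdsWithin] with w hw
      have : w ≠ 0 := hw
      simp [f, this]
    exact tendsto_nhds_unique h1 h2
  have hz : f = 0 := by
    funext w
    simp [f, h0]
  rw [hz] at hf
  have := hf.hasFPowerSeriesAt.eq_zero
  intro m
  have h3 := congrArg (fun q => ‖q m‖) this
  simpa [FormalMultilinearSeries.ofScalars_norm] using h3

lemma fiber_zero {ι : Type*} (N : ι → ℕ) (a : ι → ℂ)
    (h : ∀ w : ℂ, w ≠ 0 → ‖w‖ < 1 → HasSum (fun x => a x * w ^ N x) 0) (x₀ : ι)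
    (hx : ∀ x, N x = N x₀ → a x = a x₀) : a x₀ = 0 := by
  have h1 := coeff_zero_of_hasSum (fun m => ∑' x : N ⁻¹' {m}, a x) (by
    intro w hw hw1
    refine ((h w hw hw1).tsum_fiberwise N).congr_fun ?_
    intro m
    rw [← tsum_mul_right]
    apply tsum_congr
    rintro ⟨x, hx⟩
    have : N x = m := hx
    simp [this]) (N x₀)
  have hs := (h (1 / 2) (by norm_num) (by norm_num)).summable.subtype (N ⁻¹' {N x₀})
  have hcst : ∀ x : N ⁻¹' {N x₀}, a x = a x₀ := fun x => hx x x.2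
  simp only [hcst] at h1
  have hs' : Summable (fun _ : N ⁻¹' {N x₀} => a x₀ * (1 / 2 : ℂ) ^ N x₀) := by
    refine hs.congr fun x => ?_
    have : N x.1 = N x₀ := x.2
    simp [hcst x, this]
  rcases finite_or_infinite (N ⁻¹' {N x₀}) with hfin | hinf
  · rw [tsum_const] at h1
    have : Nonempty (N ⁻¹' {N x₀}) := ⟨⟨x₀, rfl⟩⟩
    have hne : Nat.card (N ⁻¹' {N x₀}) ≠ 0 := Nat.card_ne_zero.2 ⟨this, hfin⟩
    rw [nsmul_eq_mul] at h1
    exact (mul_eq_zero.1 h1).resolve_left (by exact_mod_cast hne)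
  · rw [summable_const_iff] at hs'
    exact (mul_eq_zero.1 hs').resolve_right (pow_ne_zero _ (by norm_num))

def thN (p : ℕ) (r j : ℤ) : ℕ := (r + 4 * p * j).natAbs ^ 2

lemma thN_cast (p : ℕ) (hp : 0 < p) (r j : ℤ) :
    2 * (p : ℂ) * ((r : ℂ) / (4 * p) + j) ^ 2 = (thN p r j : ℂ) / (8 * p) := by
  have h : (thN p r j : ℂ) = ((r : ℂ) + 4 * p * j) ^ 2 := by
    have : ((thN p r j : ℕ) : ℤ) = (r + 4 * p * j) ^ 2 := by simp [thN]
    exact_mod_cast congrArg (fun z : ℤ => (z : ℂ)) this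
  have hp' : (p : ℂ) ≠ 0 := by exact_mod_cast hp.ne'
  rw [h]
  field_simp
  ring

lemma theta_exp (p : ℕ) (hp : 0 < p) (r j : ℤ) (τ : ℂ) :
    Complex.exp (2 * Real.pi * Complex.I * τ * (2 * (p : ℂ) * ((r : ℂ) / (4 * p) + j) ^ 2))
      = (Function.Periodic.qParam (8 * p) τ) ^ thN p r j := by
  rw [thN_cast p hp, Function.Periodic.qParam, ← Complex.exp_nat_mul]
  congr 1
  push_cast
  ring

lemma thetaDeriv_eq (p : ℕ) (hp : 0 < p) (k : ℕ) (r : ℤ) (τ : ℂ) :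
    thetaDeriv p k r τ =
      ∑' j : ℤ, ((thN p r j : ℂ) / (8 * p)) ^ k *
        (Function.Periodic.qParam (8 * p) τ) ^ thN p r j := by
  unfold thetaDeriv
  apply tsum_congr
  intro j
  rw [theta_exp p hp, thN_cast p hp]

lemma summable_th (p : ℕ) (hp : 0 < p) (k : ℕ) (r : ℤ) (w : ℂ) (hw : ‖w‖ < 1) :
    Summable fun j : ℤ => ((thN p r j : ℂ) / (8 * p)) ^ k * w ^ thN p r j := by
  have h0 : Summable fun m : ℕ => (m : ℂ) ^ k * w ^ m :=
    summable_pow_mul_geometric_of_norm_lt_one k hw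
  have h1 : Summable fun n : ℕ => ((n ^ 2 : ℕ) : ℂ) ^ k * w ^ (n ^ 2) :=
    h0.comp_injective (i := fun n : ℕ => n ^ 2) (fun a b hab => by
      exact Nat.pow_left_injective (n := 2) (by norm_num) hab)
  have h2 : Summable fun n : ℤ => ((n.natAbs ^ 2 : ℕ) : ℂ) ^ k * w ^ (n.natAbs ^ 2) := by
    apply Summable.of_nat_of_neg
    · simpa using h1
    · simpa using h1
  have h3 := h2.comp_injective (i := fun j : ℤ => r + 4 * p * j) (fun a b hab => by
      have : (4 * p : ℤ) ≠ 0 := by positivity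
      simpa [hp.ne'] using hab)
  refine (h3.mul_left ((1 / (8 * p : ℂ)) ^ k)).congr fun j => ?_
  simp only [thN, Function.comp]
  rw [← mul_assoc, ← mul_pow]
  congr 2
  ring

lemma thetaDeriv_periodic (p : ℕ) (hp : 0 < p) (k : ℕ) (r : ℤ) (τ : ℂ) :
    thetaDeriv p k r (τ + 8 * p) = thetaDeriv p k r τ := by
  have h : Function.Periodic.qParam (8 * p) (τ + 8 * p) = Function.Periodic.qParam (8 * p) τ := by
    have hp' : (p : ℂ) ≠ 0 := by exact_mod_cast hp.ne'
    rw [Function.Periodic.qParam, Function.Periodic.qParam, Complex.exp_eq_exp_iff_exists_int]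
    refine ⟨1, ?_⟩
    push_cast
    field_simp
  rw [thetaDeriv_eq p hp, thetaDeriv_eq p hp, h]

lemma key (p : ℕ) (hp : 0 < p) (c : ℕ → ℕ → ℂ)
    (H : ∀ τ : ℂ, 0 < τ.im → ∑ s ∈ Finset.range (2 * p + 1), ∑ k ∈ Finset.range 3,
      c s k * thetaDeriv p k s τ = 0) (s : ℕ) (hs : s ≤ 2 * p) (j : ℤ) :
    ∑ k ∈ Finset.range 3, c s k * ((thN p s j : ℂ) / (8 * p)) ^ k = 0 := by
  have := fiber_zero (ι := (_ : Fin (2 * p + 1)) × ℤ) (fun x => thN p (x.1 : ℕ) x.2)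
    (fun x => ∑ k ∈ Finset.range 3, c x.1 k * ((thN p (x.1 : ℕ) x.2 : ℂ) / (8 * p)) ^ k) ?_
    ⟨⟨s, by omega⟩, j⟩ ?_
  · simpa using this
  · intro w hw hw1
    have hpR : (0 : ℝ) < 8 * p := by positivity
    obtain ⟨τ, hτ, hwτ⟩ : ∃ τ : ℂ, 0 < τ.im ∧ Function.Periodic.qParam (8 * p) τ = w := by
      refine ⟨Function.Periodic.invQParam (8 * p) w, ?_,
        Function.Periodic.qParam_right_inv hpR.ne' hw⟩
      rw [Function.Periodic.im_invQParam]
      have := Real.log_neg (norm_pos_iff.2 hw) hw1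
      have h2 : 0 < 8 * (p : ℝ) / (2 * Real.pi) := by positivity
      rw [neg_div, neg_mul, ← mul_neg]
      exact mul_pos h2 (by linarith)
    have hsum : ∀ (s k : ℕ), HasSum (fun j : ℤ => c s k *
        (((thN p s j : ℂ) / (8 * p)) ^ k * w ^ thN p s j)) (c s k * thetaDeriv p k s τ) := by
      intro s k
      rw [thetaDeriv_eq p hp, hwτ]
      exact (summable_th p hp k s w hw1).hasSum.mul_left _
    have hsum2 : ∀ s : ℕ, HasSum (fun j : ℤ => (∑ k ∈ Finset.range 3, c s k *
        ((thN p s j : ℂ) / (8 * p)) ^ k) * w ^ thN p s j)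
        (∑ k ∈ Finset.range 3, c s k * thetaDeriv p k s τ) := by
      intro s
      refine (hasSum_sum fun k _ => hsum s k).congr_fun fun j => ?_
      rw [Finset.sum_mul]
      exact Finset.sum_congr rfl fun k _ => by ring
    have hsm : Summable (fun x : (_ : Fin (2 * p + 1)) × ℤ =>
        (∑ k ∈ Finset.range 3, c x.1 k * ((thN p (x.1 : ℕ) x.2 : ℂ) / (8 * p)) ^ k) *
          w ^ thN p (x.1 : ℕ) x.2) := by
      apply Summable.of_norm
      rw [summable_sigma_of_nonneg (fun _ => norm_nonneg _)]
      exact ⟨fun s => (hsum2 s).summable.norm, (hasSum_fintype _).summable⟩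
    have h4 := hsm.hasSum
    have h5 := h4.sigma (fun s => hsum2 (s : Fin (2 * p + 1)))
    have h6 := h5.unique (hasSum_fintype _)
    rw [Fin.sum_univ_eq_sum_range (fun s => ∑ k ∈ Finset.range 3, c s k * thetaDeriv p k s τ),
      H τ hτ] at h6
    rw [h6] at h4
    exact h4
  · rintro ⟨t, i⟩ hti
    have hti : thN p (t : ℕ) i = thN p s j := hti
    have hst : (t : ℕ) = s := by
      have ht := t.2
      have h1 : (((t : ℕ) : ℤ) + 4 * p * i) ^ 2 = ((s : ℤ) + 4 * p * j) ^ 2 := by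
        have := congrArg (fun n : ℕ => (n : ℤ)) hti
        simpa [thN] using this
      generalize (t : ℕ) = t at *
      have hpz : (0 : ℤ) < p := by exact_mod_cast hp
      have ht' : (t : ℤ) ≤ 2 * p := by omega
      have hs' : (s : ℤ) ≤ 2 * p := by omega
      rcases sq_eq_sq_iff_eq_or_eq_neg.1 h1 with h | h
      · have h2 : (t : ℤ) - s = 4 * p * (j - i) := by linarith
        have h3 : j - i < 1 := by
          by_contra hh; push Not at hh; nlinarith
        have h4 : -1 < j - i := by
          by_contra hh; push Not at hh; nlinarith
        have h5 : j - i = 0 := by omega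
        rw [h5] at h2
        omega
      · have h2 : (t : ℤ) + s = 4 * p * (- j - i) := by linarith
        have h3 : - j - i < 2 := by
          by_contra hh; push Not at hh; nlinarith
        have h4 : -1 < - j - i := by
          by_contra hh; push Not at hh; nlinarith
        have h5 : - j - i = 0 ∨ - j - i = 1 := by omega
        rcases h5 with h5 | h5 <;> rw [h5] at h2 <;> omega
    change ∑ k ∈ Finset.range 3, c (t : ℕ) k * ((thN p (t : ℕ) i : ℂ) / (8 * p)) ^ k =
      ∑ k ∈ Finset.range 3, c s k * ((thN p s j : ℂ) / (8 * p)) ^ k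
    rw [hti, hst]

lemma quad_zero (a b c x y z : ℂ) (hxy : x ≠ y) (hxz : x ≠ z) (hyz : y ≠ z)
    (h1 : a + b * x + c * x ^ 2 = 0) (h2 : a + b * y + c * y ^ 2 = 0)
    (h3 : a + b * z + c * z ^ 2 = 0) : a = 0 ∧ b = 0 ∧ c = 0 := by
  have e1 : b + c * (x + y) = 0 := by
    apply mul_left_cancel₀ (sub_ne_zero.2 hxy)
    linear_combination h1 - h2
  have e2 : b + c * (x + z) = 0 := by
    apply mul_left_cancel₀ (sub_ne_zero.2 hxz)
    linear_combination h1 - h3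
  have hc : c = 0 := by
    apply mul_left_cancel₀ (sub_ne_zero.2 hyz)
    linear_combination e1 - e2
  subst hc
  have hb : b = 0 := by simpa using e1
  subst hb
  exact ⟨by simpa using h1, rfl, rfl⟩

/-- Coefficients with prescribed values at `k = 0, 1, 2`. -/
def coefs (a b c : ℕ → ℂ) (s k : ℕ) : ℂ := if k = 0 then a s else if k = 1 then b s else c s

lemma vanish (p : ℕ) (hp : 0 < p) (a b c : ℕ → ℂ)
    (H : ∀ τ : ℂ, 0 < τ.im → ∑ s ∈ Finset.range (2 * p + 1),
      (a s * thetaDeriv p 0 s τ + b s * thetaDeriv p 1 s τ + c s * thetaDeriv p 2 s τ) = 0)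
    (hb : b 0 = 0 ∧ b (2 * p) = 0) (hc : c 0 = 0 ∧ c (2 * p) = 0)
    (s : ℕ) (hs : s ≤ 2 * p) : a s = 0 ∧ b s = 0 ∧ c s = 0 := by
  have h := key p hp (coefs a b c) (by
    intro τ hτ
    rw [← H τ hτ]
    refine Finset.sum_congr rfl fun s _ => ?_
    simp [Finset.sum_range_succ, coefs]) s hs
  simp only [Finset.sum_range_succ, coefs] at h
  simp only [Finset.range_zero, Finset.sum_empty, zero_add, if_true, pow_zero, mul_one,
    one_ne_zero, if_false, pow_one, OfNat.ofNat_ne_zero, OfNat.ofNat_ne_one] at h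
  have hp' : (p : ℂ) ≠ 0 := by exact_mod_cast hp.ne'
  by_cases h0 : s = 0
  · subst h0
    have := h 0
    rw [hb.1, hc.1] at this
    exact ⟨by simpa using this, hb.1, hc.1⟩
  by_cases h2 : s = 2 * p
  · subst h2
    have := h 0
    rw [hb.2, hc.2] at this
    exact ⟨by simpa using this, hb.2, hc.2⟩
  have hinj : ∀ i j : ℤ, thN p s i ≠ thN p s j →
      (thN p s i : ℂ) / (8 * p) ≠ (thN p s j : ℂ) / (8 * p) := by
    intro i j hij heq
    rw [div_left_inj' (by simpa using hp')] at heq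
    exact hij (by exact_mod_cast heq)
  have hne : ∀ i j : ℤ, ((s : ℤ) + 4 * p * i).natAbs ≠ ((s : ℤ) + 4 * p * j).natAbs →
      thN p s i ≠ thN p s j := by
    intro i j hij heq
    exact hij (Nat.pow_left_injective (n := 2) (by norm_num) heq)
  exact quad_zero _ _ _ _ _ _ (hinj 0 1 (hne _ _ (by omega)))
    (hinj 0 (-1) (hne _ _ (by omega))) (hinj 1 (-1) (hne _ _ (by omega))) (h 0) (h 1) (h (-1))

/-- Collected coefficient of a finite family placed at positions `e`. -/
def place {n : ℕ} (e : Fin n → ℕ) (g : Fin n → ℂ) (s : ℕ) : ℂ := ∑ r, if e r = s then g r else 0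

lemma sum_place {n M : ℕ} (e : Fin n → ℕ) (he : ∀ r, e r < M) (g : Fin n → ℂ) (T : ℕ → ℂ) :
    ∑ s ∈ Finset.range M, place e g s * T s = ∑ r, g r * T (e r) := by
  simp only [place, Finset.sum_mul]
  rw [Finset.sum_comm]
  refine Finset.sum_congr rfl fun r _ => ?_
  simp [ite_mul, he r]

lemma place_apply {n : ℕ} (e : Fin n → ℕ) (he : Function.Injective e) (g : Fin n → ℂ) (r : Fin n) :
    place e g (e r) = g r := by
  simp [place, he.eq_iff]

lemma place_ne {n : ℕ} (e : Fin n → ℕ) (g : Fin n → ℂ) (s : ℕ) (h : ∀ r, e r ≠ s) :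
    place e g s = 0 := by
  simp [place, h]

/-- Let `p ≥ 3` be odd.  The `(15p-5)/2` holomorphic functions on
the upper half-plane
`τ ↦ τ^i (θ''_{p-r}(τ) - θ''_{p+r}(τ))` for `1 ≤ r ≤ (p-1)/2`, `0 ≤ i ≤ 2`;
`τ ↦ τ^i θ'_r(τ)` for `1 ≤ r ≤ 2p-1`, `0 ≤ i ≤ 1`; and
`τ ↦ θ_r(τ)` for `0 ≤ r ≤ 2p`,
are linearly independent over `ℂ`. -/
theorem theta_family_linearIndependent (p : ℕ) (hp : Odd p) (hp3 : 3 ≤ p) :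
    LinearIndependent ℂ
      (fun idx : (Fin ((p - 1) / 2) × Fin 3) ⊕ ((Fin (2 * p - 1) × Fin 2) ⊕ Fin (2 * p + 1)) =>
        match idx with
        | Sum.inl (r, i) => fun τ : UpperHalfPlane =>
            (τ : ℂ) ^ (i : ℕ) *
              (thetaDeriv p 2 ((p : ℤ) - ((r : ℕ) + 1)) τ -
                thetaDeriv p 2 ((p : ℤ) + ((r : ℕ) + 1)) τ)
        | Sum.inr (Sum.inl (r, i)) => fun τ : UpperHalfPlane =>
            (τ : ℂ) ^ (i : ℕ) * thetaDeriv p 1 ((r : ℕ) + 1) τ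
        | Sum.inr (Sum.inr r) => fun τ : UpperHalfPlane =>
            thetaDeriv p 0 (r : ℕ) τ) := by
  have hp0 : 0 < p := by omega
  rw [Fintype.linearIndependent_iff]
  intro g hg
  let em : Fin ((p - 1) / 2) → ℕ := fun r => p - (r + 1)
  let ep : Fin ((p - 1) / 2) → ℕ := fun r => p + (r + 1)
  let e1 : Fin (2 * p - 1) → ℕ := fun r => r + 1
  let e0 : Fin (2 * p + 1) → ℕ := fun r => r
  let C2 : Fin 3 → ℕ → ℂ := fun i s =>
    place em (fun r => g (Sum.inl (r, i))) s - place ep (fun r => g (Sum.inl (r, i))) s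
  let C1 : Fin 2 → ℕ → ℂ := fun i => place e1 (fun r => g (Sum.inr (Sum.inl (r, i))))
  let C0 : ℕ → ℂ := place e0 (fun r => g (Sum.inr (Sum.inr r)))
  have hep : Function.Injective ep := by
    intro a b hab
    simp only [ep] at hab
    exact Fin.ext (by omega)
  have he1 : Function.Injective e1 := by
    intro a b hab
    simp only [e1] at hab
    exact Fin.ext (by omega)
  have he0 : Function.Injective e0 := by
    intro a b hab
    exact Fin.ext hab
  have hC2e : ∀ i, C2 i 0 = 0 ∧ C2 i (2 * p) = 0 := by
    intro i
    constructor <;> simp only [C2] <;> rw [place_ne, place_ne, sub_zero] <;> intro r <;>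
      have := r.2 <;> simp only [em, ep] <;> omega
  have hC1e : ∀ i, C1 i 0 = 0 ∧ C1 i (2 * p) = 0 := by
    intro i
    constructor <;> simp only [C1] <;> rw [place_ne] <;> intro r <;>
      have := r.2 <;> simp only [e1] <;> omega
  have hC2 : ∀ i r, C2 i (ep r) = - g (Sum.inl (r, i)) := by
    intro i r
    simp only [C2]
    rw [place_apply ep hep, place_ne em, zero_sub]
    intro r'
    simp only [em, ep]
    omega
  let S2 : Fin 3 → ℂ → ℂ := fun i τ => ∑ s ∈ Finset.range (2 * p + 1), C2 i s * thetaDeriv p 2 s τ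
  let S1 : Fin 2 → ℂ → ℂ := fun i τ => ∑ s ∈ Finset.range (2 * p + 1), C1 i s * thetaDeriv p 1 s τ
  let S0 : ℂ → ℂ := fun τ => ∑ s ∈ Finset.range (2 * p + 1), C0 s * thetaDeriv p 0 s τ
  have hS2 : ∀ i τ, S2 i τ = ∑ r : Fin ((p - 1) / 2), g (Sum.inl (r, i)) *
      (thetaDeriv p 2 ((p : ℤ) - ((r : ℕ) + 1)) τ -
                thetaDeriv p 2 ((p : ℤ) + ((r : ℕ) + 1)) τ) := by
    intro i τ
    simp only [S2, C2, sub_mul, Finset.sum_sub_distrib, mul_sub]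
    rw [sum_place em _ _ (fun s => thetaDeriv p 2 s τ),
      sum_place ep _ _ (fun s => thetaDeriv p 2 s τ)]
    · congr 1
      refine Finset.sum_congr rfl fun r _ => ?_
      have hr : ((em r : ℕ) : ℤ) = (p : ℤ) - ((r : ℕ) + 1) := by
        have := r.2
        simp only [em]
        omega
      rw [hr]
    · intro r
      have := r.2
      simp only [ep]
      omega
    · intro r
      simp only [em]
      omega
  have hS1 : ∀ i τ, S1 i τ = ∑ r : Fin (2 * p - 1), g (Sum.inr (Sum.inl (r, i))) *
      thetaDeriv p 1 ((r : ℕ) + 1) τ := by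
    intro i τ
    simp only [S1, C1]
    rw [sum_place e1 _ _ (fun s => thetaDeriv p 1 s τ)]
    · rfl
    · intro r
      have := r.2
      simp only [e1]
      omega
  have hS0 : ∀ τ, S0 τ = ∑ r : Fin (2 * p + 1), g (Sum.inr (Sum.inr r)) *
      thetaDeriv p 0 (r : ℕ) τ := by
    intro τ
    simp only [S0, C0]
    rw [sum_place e0 _ _ (fun s => thetaDeriv p 0 s τ)]
    intro r
    exact r.2
  have hrel : ∀ τ : ℂ, 0 < τ.im → (S0 τ + S1 0 τ + S2 0 τ) + τ * (S1 1 τ + S2 1 τ)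
      + τ ^ 2 * S2 2 τ = 0 := by
    intro τ hτ
    have h := congrFun hg (⟨τ, hτ⟩ : UpperHalfPlane)
    simp only [Fintype.sum_sum_type, Fintype.sum_prod_type_right, Fin.sum_univ_three,
      Fin.sum_univ_two, Pi.add_apply, Finset.sum_apply, Pi.smul_apply, smul_eq_mul,
      Pi.zero_apply] at h
    simp only [hS0, hS1, hS2, mul_add, Finset.mul_sum]
    rw [← h]
    simp only [UpperHalfPlane.coe_mk, Fin.val_zero, Fin.val_one, Fin.val_two, pow_zero, pow_one,
      one_mul, mul_left_comm]
    ring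
  have hper2 : ∀ i τ, S2 i (τ + 8 * p) = S2 i τ := by
    intro i τ
    simp only [S2, thetaDeriv_periodic p hp0]
  have hper1 : ∀ i τ, S1 i (τ + 8 * p) = S1 i τ := by
    intro i τ
    simp only [S1, thetaDeriv_periodic p hp0]
  have hper0 : ∀ τ, S0 (τ + 8 * p) = S0 τ := by
    intro τ
    simp only [S0, thetaDeriv_periodic p hp0]
  have hsep : ∀ τ : ℂ, 0 < τ.im → S0 τ + S1 0 τ + S2 0 τ = 0 ∧ S1 1 τ + S2 1 τ = 0 ∧
      S2 2 τ = 0 := by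
    intro τ hτ
    have r0 := hrel τ hτ
    have r1 := hrel (τ + 8 * p) (by simpa using hτ)
    have r2 := hrel (τ + 8 * p + 8 * p) (by simpa using hτ)
    simp only [hper0, hper1, hper2] at r1 r2
    have hp' : (p : ℂ) ≠ 0 := by exact_mod_cast hp0.ne'
    refine quad_zero _ _ _ τ (τ + 8 * p) (τ + 8 * p + 8 * p) ?_ ?_ ?_ (by linear_combination r0)
      (by linear_combination r1) (by linear_combination r2)
    · simpa using hp'
    · intro h
      apply hp'
      linear_combination (-1 / 16) * h
    · simpa using hp'
  have hv2 : ∀ i : Fin 3, ∀ s ≤ 2 * p, C2 i s = 0 := by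
    intro i s hs
    fin_cases i
    · refine (vanish p hp0 C0 (C1 0) (C2 0) ?_ (hC1e 0) (hC2e 0) s hs).2.2
      intro τ hτ
      simpa [Finset.sum_add_distrib] using (hsep τ hτ).1
    · refine (vanish p hp0 0 (C1 1) (C2 1) ?_ (hC1e 1) (hC2e 1) s hs).2.2
      intro τ hτ
      simpa [Finset.sum_add_distrib] using (hsep τ hτ).2.1
    · refine (vanish p hp0 0 0 (C2 2) ?_ (by simp) (hC2e 2) s hs).2.2
      intro τ hτ
      simpa [Finset.sum_add_distrib] using (hsep τ hτ).2.2
  have hv1 : ∀ i : Fin 2, ∀ s ≤ 2 * p, C1 i s = 0 := by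
    intro i s hs
    fin_cases i
    · refine (vanish p hp0 C0 (C1 0) (C2 0) ?_ (hC1e 0) (hC2e 0) s hs).2.1
      intro τ hτ
      simpa [Finset.sum_add_distrib] using (hsep τ hτ).1
    · refine (vanish p hp0 0 (C1 1) (C2 1) ?_ (hC1e 1) (hC2e 1) s hs).2.1
      intro τ hτ
      simpa [Finset.sum_add_distrib] using (hsep τ hτ).2.1
  have hv0 : ∀ s ≤ 2 * p, C0 s = 0 := by
    intro s hs
    refine (vanish p hp0 C0 (C1 0) (C2 0) ?_ (hC1e 0) (hC2e 0) s hs).1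
    intro τ hτ
    simpa [Finset.sum_add_distrib] using (hsep τ hτ).1
  rintro (⟨r, i⟩ | ⟨r, i⟩ | r)
  · have h := hv2 i (ep r) (by have := r.2; simp only [ep]; omega)
    rw [hC2] at h
    exact neg_eq_zero.1 h
  · have h := hv1 i (e1 r) (by have := r.2; simp only [e1]; omega)
    simp only [C1] at h
    rwa [place_apply e1 he1] at h
  · have h := hv0 (e0 r) (by have := r.2; simp only [e0]; omega)
    simp only [C0] at h
    rwa [place_apply e0 he0] at h

end
end
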